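/- (Distribution loader, Lemma 1.) Let n ∈ ℕ, x ∈ {0,1}^n (encoded as x : Fin n → Fin 2), and p₊, p₋ ∈ [0,1]. Set θ₀ = 2·arccos(√(1−p₊)) and θ_D = −2(arccos(√(1−p₊)) + arccos(√(1−p₋))). Define U(x, p₋, p₊) as the matrix product DL(x)·D(x), where DL(x) is the tensor product of the matrices RY(θ₀ + x_m·θ_D) and D(x) is the tensor product of the matrices RX(x_m·π), for m = 0,…,n−1. Then U(x, p₋, p₊) applied to the basis vector e_𝟘 equals (−i)^{Σ_j x_j} · Σ_{x̃ ∈ {0,1}^n} √(φ(x̃|x)) · e_{x̃}; i.e., up to the global phase (−i)^{Σ_j x_j}, U(x, p₋, p₊)|0⟩ is the superposition |Ψ(x)⟩ = Σ_{x̃} √(φ(x̃|x)) |x̃⟩ of all perturbations of x weighted by the square roots of their transition probabilities. -/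

import Mathlib

open Matrix

/-- The single-qubit rotation `RY θ` as a complex 2×2 matrix. -/
noncomputable def RY (θ : ℝ) : Matrix (Fin 2) (Fin 2) ℂ :=
  !![(Real.cos (θ / 2) : ℂ), -(Real.sin (θ / 2) : ℂ);
     (Real.sin (θ / 2) : ℂ), (Real.cos (θ / 2) : ℂ)]

/-- The single-qubit rotation `RX θ` as a complex 2×2 matrix. -/
noncomputable def RX (θ : ℝ) : Matrix (Fin 2) (Fin 2) ℂ :=
  !![(Real.cos (θ / 2) : ℂ), -Complex.I * (Real.sin (θ / 2) : ℂ);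
     -Complex.I * (Real.sin (θ / 2) : ℂ), (Real.cos (θ / 2) : ℂ)]

/-- Tensor product of `n` 2×2 complex matrices, indexed by `Fin n → Fin 2`. -/
noncomputable def tensorProd {n : ℕ} (A : Fin n → Matrix (Fin 2) (Fin 2) ℂ) :
    Matrix (Fin n → Fin 2) (Fin n → Fin 2) ℂ :=
  fun i j => ∏ m, A m (i m) (j m)

/-- The standard basis vector of `ℂ^(Fin n → Fin 2)` supported at `x`. -/
noncomputable def basisVec {n : ℕ} (x : Fin n → Fin 2) : (Fin n → Fin 2) → ℂ :=
  Pi.single x 1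

/-- The sparsity-aware PMF `φ(x̃ | x; p₊, p₋)`. -/
def phi {n : ℕ} (pPlus pMinus : ℝ) (x xt : Fin n → Fin 2) : ℝ :=
  ∏ j, (if xt j ≠ x j then (if x j = 0 then pPlus else pMinus)
        else 1 - (if x j = 0 then pPlus else pMinus))

/-!
The circuit acts qubit by qubit, so it sends product states to product states. On a single qubit
`RX (a * π)` sends `|0⟩` to `(-i)^a |a⟩`. The loader angle is `θ₀ = 2 * arccos √(1 - p₊)` on a bit
`0` and `θ₀ + θ_D = -2 * arccos √(1 - p₋)` on a bit `1`; the change of sign matches the antisymmetry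
of `RY`, so in both cases `|a⟩` is sent to `√(1 - p) |a⟩ + √p |1 - a⟩`, where `p` is the probability
of flipping `a`.
-/

/-- The product state `⨂ₘ v m` of `n` single-qubit states, in the coordinates of `tensorProd`. -/
def tensorVec {n : ℕ} (v : Fin n → Fin 2 → ℂ) : (Fin n → Fin 2) → ℂ :=
  fun y => ∏ m, v m (y m)

/-- The probability that a bit with value `a` is flipped, `P_F` in the paper. -/
def flipProb (pPlus pMinus : ℝ) (a : Fin 2) : ℝ :=
  if a = 0 then pPlus else pMinus

/-- The single-qubit state `√(1 - p) |a⟩ + √p |1 - a⟩`, whose measurement flips the bit `a` with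
probability `p` when `p ∈ [0, 1]`. -/
noncomputable def flipState (p : ℝ) (a : Fin 2) : Fin 2 → ℂ :=
  fun b => (Real.sqrt (if b ≠ a then p else 1 - p) : ℂ)

section ProductStates

variable {n : ℕ}

lemma tensorProd_mulVec_tensorVec (A : Fin n → Matrix (Fin 2) (Fin 2) ℂ)
    (v : Fin n → Fin 2 → ℂ) :
    tensorProd A *ᵥ tensorVec v = tensorVec fun m => A m *ᵥ v m := by
  ext y
  calc (tensorProd A *ᵥ tensorVec v) y
      = ∑ k : Fin n → Fin 2, ∏ m, A m (y m) (k m) * v m (k m) := by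
        simp only [mulVec, dotProduct, tensorProd, tensorVec, Finset.prod_mul_distrib]
    _ = ∏ m, ∑ b, A m (y m) b * v m b :=
        (Fintype.prod_sum fun m b => A m (y m) b * v m b).symm

lemma tensorVec_smul (c : Fin n → ℂ) (v : Fin n → Fin 2 → ℂ) :
    tensorVec (fun m => c m • v m) = (∏ m, c m) • tensorVec v :=
  funext fun _ => Finset.prod_mul_distrib

lemma basisVec_eq_tensorVec (x : Fin n → Fin 2) :
    basisVec x = tensorVec fun m => Pi.single (x m) 1 := by
  ext y
  simp only [basisVec, tensorVec, Pi.single_apply, Fintype.prod_boole, funext_iff]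
  congr

lemma sum_smul_basisVec (f : (Fin n → Fin 2) → ℂ) : ∑ y, f y • basisVec y = f :=
  (pi_eq_sum_univ' f).symm

end ProductStates

lemma sqrt_finsetProd {ι : Type*} (s : Finset ι) {f : ι → ℝ} (hf : ∀ i ∈ s, 0 ≤ f i) :
    √(∏ i ∈ s, f i) = ∏ i ∈ s, √(f i) := by
  simpa only [Real.sqrt_eq_rpow] using (Real.finsetProd_rpow s f hf (1 / 2)).symm

lemma sin_arccos_sqrt_one_sub {p : ℝ} (hp : p ≤ 1) :
    Real.sin (Real.arccos √(1 - p)) = √p := by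
  rw [Real.sin_arccos, Real.sq_sqrt (sub_nonneg.mpr hp), sub_sub_cancel]

lemma cos_arccos_sqrt_one_sub {p : ℝ} (hp : 0 ≤ p) :
    Real.cos (Real.arccos √(1 - p)) = √(1 - p) :=
  Real.cos_arccos (by linarith [Real.sqrt_nonneg (1 - p)])
    (Real.sqrt_le_one.mpr (sub_le_self 1 hp))

lemma RX_mul_pi_mulVec_single_zero (a : Fin 2) :
    RX ((a : ℝ) * Real.pi) *ᵥ Pi.single 0 1 = (-Complex.I) ^ (a : ℕ) • Pi.single a 1 := by
  ext b
  fin_cases a <;> fin_cases b <;> simp [RX]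

lemma RY_mulVec_single_zero (θ : ℝ) :
    RY θ *ᵥ Pi.single 0 1 = ![(Real.cos (θ / 2) : ℂ), (Real.sin (θ / 2) : ℂ)] := by
  ext b
  fin_cases b <;> simp [RY]

lemma RY_neg_mulVec_single_one (θ : ℝ) :
    RY (-θ) *ᵥ Pi.single 1 1 = ![(Real.sin (θ / 2) : ℂ), (Real.cos (θ / 2) : ℂ)] := by
  ext b
  fin_cases b <;> simp [RY, neg_div]

lemma RY_mulVec_single_eq_flipState {p : ℝ} (hp : p ∈ Set.Icc 0 1) (a : Fin 2) :
    RY ((-1) ^ (a : ℕ) * (2 * Real.arccos √(1 - p))) *ᵥ Pi.single a 1 = flipState p a := by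
  have half_angle : 2 * Real.arccos √(1 - p) / 2 = Real.arccos √(1 - p) := by ring
  fin_cases a
  · simp only [Fin.zero_eta, pow_zero, one_mul, RY_mulVec_single_zero, half_angle,
      cos_arccos_sqrt_one_sub hp.1, sin_arccos_sqrt_one_sub hp.2]
    ext b
    fin_cases b <;> simp [flipState]
  · simp only [Fin.mk_one, pow_one, neg_one_mul, RY_neg_mulVec_single_one, half_angle,
      cos_arccos_sqrt_one_sub hp.1, sin_arccos_sqrt_one_sub hp.2]
    ext b
    fin_cases b <;> simp [flipState]

lemma loaderAngle_eq (pPlus pMinus : ℝ) (a : Fin 2) :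
    2 * Real.arccos √(1 - pPlus) +
        (a : ℝ) * (-2 * (Real.arccos √(1 - pPlus) + Real.arccos √(1 - pMinus))) =
      (-1) ^ (a : ℕ) * (2 * Real.arccos √(1 - flipProb pPlus pMinus a)) := by
  fin_cases a
  · simp [flipProb]
  · simp only [flipProb, Fin.mk_one, Nat.cast_one, one_ne_zero, if_false]
    ring

section Circuit

variable {n : ℕ}

lemma tensorProd_RX_mulVec_basisVec_zero (x : Fin n → Fin 2) :
    tensorProd (fun m => RX ((x m : ℝ) * Real.pi)) *ᵥ basisVec (fun _ => 0) =
      (-Complex.I) ^ (∑ j, (x j : ℕ)) • basisVec x := by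
  simp only [basisVec_eq_tensorVec, tensorProd_mulVec_tensorVec, RX_mul_pi_mulVec_single_zero,
    tensorVec_smul, Finset.prod_pow_eq_pow_sum]

lemma tensorProd_RY_mulVec_basisVec {p : Fin n → ℝ} (hp : ∀ m, p m ∈ Set.Icc 0 1)
    (x : Fin n → Fin 2) :
    tensorProd (fun m => RY ((-1) ^ (x m : ℕ) * (2 * Real.arccos √(1 - p m)))) *ᵥ basisVec x =
      tensorVec fun m => flipState (p m) (x m) := by
  simp only [basisVec_eq_tensorVec, tensorProd_mulVec_tensorVec,
    RY_mulVec_single_eq_flipState (hp _)]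

lemma sum_sqrt_phi_smul_basisVec {pPlus pMinus : ℝ} {x : Fin n → Fin 2}
    (hflip : ∀ m, flipProb pPlus pMinus (x m) ∈ Set.Icc 0 1) :
    ∑ y, (√(phi pPlus pMinus x y) : ℂ) • basisVec y =
      tensorVec fun m => flipState (flipProb pPlus pMinus (x m)) (x m) := by
  rw [sum_smul_basisVec]
  ext y
  have factor_nonneg (m : Fin n) : 0 ≤ if y m ≠ x m then flipProb pPlus pMinus (x m)
      else 1 - flipProb pPlus pMinus (x m) := by
    split_ifs
    exacts [(hflip m).1, sub_nonneg.mpr (hflip m).2]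
  simp only [tensorVec, flipState, ← Complex.ofReal_prod]
  rw [← sqrt_finsetProd _ fun m _ => factor_nonneg m]
  rfl

end Circuit

/-- Distribution-loader lemma (Lemma 1): `U(x, p₋, p₊) = DL(x) · D(x)` maps `|0…0⟩`
to the superposition `|Ψ(x)⟩` of all perturbations, up to the global phase
`(−i)^{Σ_j x_j}`. -/
theorem distribution_loader {n : ℕ} (x : Fin n → Fin 2) (pPlus pMinus : ℝ)
    (hp0 : 0 ≤ pPlus) (hp1 : pPlus ≤ 1) (hm0 : 0 ≤ pMinus) (hm1 : pMinus ≤ 1) :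
    ((tensorProd (fun m => RY (2 * Real.arccos (Real.sqrt (1 - pPlus)) +
        (x m : ℝ) * (-2 * (Real.arccos (Real.sqrt (1 - pPlus)) +
          Real.arccos (Real.sqrt (1 - pMinus))))))) *
      (tensorProd (fun m => RX ((x m : ℝ) * Real.pi)))) *ᵥ basisVec (fun _ => 0) =
      (-Complex.I) ^ (∑ j, (x j : ℕ)) •
        ∑ xt : Fin n → Fin 2, (Real.sqrt (phi pPlus pMinus x xt) : ℂ) • basisVec xt := by
  have hflip (m : Fin n) : flipProb pPlus pMinus (x m) ∈ Set.Icc 0 1 := by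
    unfold flipProb
    split_ifs
    exacts [⟨hp0, hp1⟩, ⟨hm0, hm1⟩]
  rw [← mulVec_mulVec, tensorProd_RX_mulVec_basisVec_zero, mulVec_smul]
  simp only [loaderAngle_eq]
  rw [tensorProd_RY_mulVec_basisVec hflip, sum_sqrt_phi_smul_basisVec hflip]
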